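/- Let G = ℤ² * ℤ be the free product of ℤ² and ℤ, with canonical inclusions ι₁ : ℤ² → G and ι₂ : ℤ → G, and write c := ι₂(1). For every automorphism Ψ of G there exist an automorphism Φ of G and an element h ∈ G such that: (i) Ψ(x) = h⁻¹·Φ(x)·h for all x ∈ G; (ii) there is an automorphism φ of ℤ² with Φ(ι₁(v)) = ι₁(φ(v)) for all v ∈ ℤ² (Φ restricts to an automorphism of the ℤ² factor); and (iii) there exist w, x ∈ ℤ² and ε ∈ {1, −1} such that Φ(c) = ι₁(w)·ι₂(ε)·ι₁(x). -/

import Mathlib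

/-- The free product `ℤ² * ℤ`. -/
abbrev Z2astZ : Type := Monoid.Coprod (Multiplicative (ℤ × ℤ)) (Multiplicative ℤ)

/-- The canonical inclusion `ι₁ : ℤ² → ℤ² * ℤ`. -/
def iota1 (v : ℤ × ℤ) : Z2astZ := Monoid.Coprod.inl (Multiplicative.ofAdd v)

/-- The canonical inclusion `ι₂ : ℤ → ℤ² * ℤ`. -/
def iota2 (n : ℤ) : Z2astZ := Monoid.Coprod.inr (Multiplicative.ofAdd n)

/-- The generator `c` of the `ℤ` free factor. -/
def cGen : Z2astZ := iota2 1

/-!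
For any group `A`, the Bass–Serre tree of `A ∗ ℤ`, viewed as an HNN extension of `A` over the
trivial group with stable letter `c`, has the left cosets of `A` as its vertices, and the
displacement `|g|` of the base vertex counts the letters `c^{±1}` in the reduced word of `g`. By the
Euclidean algorithm on lengths, two commuting elements either lie in a common conjugate of `A` or in
a common cyclic subgroup. An automorphism `Ψ` therefore carries `ℤ²`, which is not cyclic, into a
conjugate of `ℤ²`, and after composing with an inner automorphism we get `Φ` with `Φ(ℤ²) ⊆ ℤ²`.

In the image under `Φ` of a reduced word, less than half of either of two consecutive letters
cancels: an element with nonzero exponent sum in `c` is hyperbolic, and nontrivial elements of `A`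
fix only the base vertex. Hence `|Φ g| ≥ |g| + |Φ c| - 1` whenever `|g| > 0`. So `Φ g ∈ A` forces
`g ∈ A`, and the choice `g = Φ⁻¹ c` gives `|Φ c| = 1`.
-/

section LyndonLength

variable {G : Type*} [Group G] {len : G → ℕ}

/-- Twice the Gromov product of `g` and `h` at the base point, for the length function `len`: when
`len g` is the distance from `o` to `g • o` in a tree, the geodesics from `o` to `g • o` and `h • o`
share a segment of length `gromov len g h / 2`. -/
def gromov (len : G → ℕ) (g h : G) : ℤ := len g + len h - len (g⁻¹ * h)

/-- Lyndon's axioms for an integral length function on a group; displacement functions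
`g ↦ dist o (g • o)` of actions on trees satisfy them. -/
structure IsLyndonLength (len : G → ℕ) : Prop where
  map_one : len 1 = 0
  map_inv (g : G) : len g⁻¹ = len g
  min_gromov_le (g h k : G) : min (gromov len g h) (gromov len h k) ≤ gromov len g k

namespace IsLyndonLength

theorem gromov_comm (hlen : IsLyndonLength len) (g h : G) : gromov len g h = gromov len h g := by
  rw [gromov, gromov, ← hlen.map_inv (g⁻¹ * h), mul_inv_rev, inv_inv, add_comm (len g : ℤ)]

theorem gromov_inv_left (hlen : IsLyndonLength len) (g h : G) :
    gromov len g⁻¹ h = len g + len h - len (g * h) := by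
  rw [gromov, hlen.map_inv, inv_inv]

theorem gromov_mul_right (g h : G) : gromov len g (g * h) = len g + len (g * h) - len h := by
  rw [gromov, inv_mul_cancel_left]

theorem gromov_nonneg (hlen : IsLyndonLength len) (g h : G) : 0 ≤ gromov len g h := by
  have h₁ := hlen.min_gromov_le g 1 h
  simpa [gromov, hlen.map_one, hlen.map_inv] using h₁

theorem map_mul_le (hlen : IsLyndonLength len) (g h : G) : len (g * h) ≤ len g + len h := by
  have h₁ := hlen.gromov_nonneg g⁻¹ h
  rw [hlen.gromov_inv_left] at h₁
  omega

theorem add_lt_map_mul_add_of_lt_gromov (hlen : IsLyndonLength len) {g h p : G}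
    (hg : len g < len (g * h)) (hh : len h < len (g * h)) (hp : len h < gromov len h p) :
    len g + len p < len (g * p) + len h ∧ len g < gromov len g (g * p) := by
  have hmin := hlen.min_gromov_le g⁻¹ p h
  rw [hlen.gromov_comm p h, hlen.gromov_inv_left, hlen.gromov_inv_left] at hmin
  rw [gromov_mul_right]
  omega

-- The chain condition says that less than half of either of two consecutive factors cancels.
theorem add_length_le_map_prod (hlen : IsLyndonLength len) {g : G} {l : List G} (hg : 0 < len g)
    (hl : (g :: l).IsChain fun h k ↦ len h < len (h * k) ∧ len k < len (h * k)) :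
    len g + l.length ≤ len (g :: l).prod ∧ len g < gromov len g (g :: l).prod := by
  induction l generalizing g with
  | nil => simp [gromov, hlen.map_one, hg]
  | cons h l ih =>
    rw [List.isChain_cons_cons] at hl
    obtain ⟨⟨hgh, hhg⟩, hl⟩ := hl
    have hh : 0 < len h := by have := hlen.map_mul_le g h; omega
    obtain ⟨hlength, hgromov⟩ := ih hh hl
    have hmul := hlen.add_lt_map_mul_add_of_lt_gromov hgh hhg hgromov
    rw [List.prod_cons, List.length_cons]
    exact ⟨by omega, hmul.2⟩

theorem lt_map_pow (hlen : IsLyndonLength len) {g : G} (hg : len g < len (g * g)) (n : ℕ) :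
    n < len (g ^ (n + 1)) := by
  have hpos : 0 < len g := by have := hlen.map_mul_le g g; omega
  have hpow := (hlen.add_length_le_map_prod (l := List.replicate n g) hpos
    (List.isChain_replicate_of_rel (n + 1) ⟨hg, hg⟩)).1
  rw [← List.replicate_succ, List.prod_replicate, List.length_replicate] at hpow
  omega

theorem map_mul_eq_of_commute (hlen : IsLyndonLength len) {x y : G} (hxy : Commute x y)
    (hle : len x ≤ len y) (hmul : len y ≤ len (x * y)) (hinv : len y ≤ len (x⁻¹ * y)) :
    len (x * y) = len y := by
  have hmin := hlen.min_gromov_le x (x * y) y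
  have hxyy : gromov len (x * y) y = len (x * y) + len y - len x := by
    rw [gromov, hxy.eq, mul_inv_rev, inv_mul_cancel_right, hlen.map_inv]
  rw [gromov_mul_right, hxyy, gromov] at hmin
  omega

theorem map_mul_self_le_of_commute (hlen : IsLyndonLength len) {x y : G} (hxy : Commute x y)
    (hle : len x ≤ len y) (hmin : ∀ n : ℤ, len y ≤ len (x ^ n * y)) : len (x * x) ≤ len x := by
  have hconst (n : ℕ) : len (x ^ n * y) = len y := by
    induction n with
    | zero => simp
    | succ n ih =>
      have hsucc : x * (x ^ n * y) = x ^ (n + 1 : ℤ) * y := by group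
      have hpred : x⁻¹ * (x ^ n * y) = x ^ (n - 1 : ℤ) * y := by group
      have hcomm : Commute x (x ^ n * y) := (Commute.self_pow x n).mul_right hxy
      rw [pow_succ', mul_assoc, hlen.map_mul_eq_of_commute hcomm (by omega)
        (by rw [hsucc, ih]; exact hmin _) (by rw [hpred, ih]; exact hmin _), ih]
  by_contra! hlt
  have hlarge := hlen.lt_map_pow hlt (2 * len y)
  have hsmall := hlen.map_mul_le (x ^ (2 * len y + 1) * y) y⁻¹
  rw [hconst, mul_inv_cancel_right, hlen.map_inv] at hsmall
  omega

-- The Euclidean algorithm on lengths: while some `x ^ n * y` is shorter than `y`, replace `y`.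
theorem exists_commute_map_mul_self_le (hlen : IsLyndonLength len) {x y : G} (hxy : Commute x y) :
    ∃ x' y' : G, Commute x' y' ∧ len (x' * x') ≤ len x' ∧
      x ∈ Subgroup.closure {x', y'} ∧ y ∈ Subgroup.closure {x', y'} := by
  induction hN : len x + len y using Nat.strong_induction_on generalizing x y with
  | _ N ih =>
  wlog hle : len x ≤ len y generalizing x y
  · obtain ⟨x', y', hcomm, hle', hy, hx⟩ := this hxy.symm (by omega) (by omega)
    exact ⟨x', y', hcomm, hle', hx, hy⟩
  by_cases hmin : ∀ n : ℤ, len y ≤ len (x ^ n * y)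
  · exact ⟨x, y, hxy, hlen.map_mul_self_le_of_commute hxy hle hmin,
      Subgroup.mem_closure_of_mem (by simp), Subgroup.mem_closure_of_mem (by simp)⟩
  · push Not at hmin
    obtain ⟨n, hn⟩ := hmin
    obtain ⟨x', y', hcomm, hle', hx, hxny⟩ :=
      ih _ (by omega) ((Commute.self_zpow x n).mul_right hxy) rfl
    exact ⟨x', y', hcomm, hle', hx,
      (Subgroup.mul_mem_cancel_left _ (Subgroup.zpow_mem _ hx n)).1 hxny⟩

theorem map_add_map_inv_mul_inv_eq (hlen : IsLyndonLength len) {p s : G}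
    (hp : len p + len (p⁻¹ * s) = len s) (hs : 2 * len p + len (s * s) ≤ 2 * len s) :
    len p + len (p⁻¹ * s⁻¹) = len s := by
  have hmin := hlen.min_gromov_le p s s⁻¹
  have hle := hlen.map_mul_le p (p⁻¹ * s⁻¹)
  rw [hlen.gromov_comm s, hlen.gromov_inv_left, gromov, gromov, hlen.map_inv] at hmin
  rw [mul_inv_cancel_left, hlen.map_inv] at hle
  omega

theorem map_inv_mul_mul_eq_zero (hlen : IsLyndonLength len) {p q s : G}
    (hp : len p + len (p⁻¹ * s) = len s) (hq : len q + len (q⁻¹ * s⁻¹) = len s)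
    (hpq : len p + len q = len s) : len (p⁻¹ * s * q) = 0 := by
  have hsq : len (s * q) = len (q⁻¹ * s⁻¹) := by rw [← hlen.map_inv, mul_inv_rev]
  have hmin := hlen.min_gromov_le p s (s * q)
  rw [gromov_mul_right, gromov, gromov, ← mul_assoc] at hmin
  omega

end IsLyndonLength

end LyndonLength

section CommonPrefix

variable {α : Type*}

open scoped Classical in
/-- The length of the longest common prefix of two lists. -/
noncomputable def commonPrefixLength : List α → List α → ℕ
  | a :: l, b :: m => if a = b then commonPrefixLength l m + 1 else 0
  | _, _ => 0

@[simp]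
theorem commonPrefixLength_nil_left (l : List α) : commonPrefixLength [] l = 0 := by
  rw [commonPrefixLength]; simp

@[simp]
theorem commonPrefixLength_nil_right (l : List α) : commonPrefixLength l [] = 0 := by
  rw [commonPrefixLength]; simp

@[simp]
theorem commonPrefixLength_cons_self (a : α) (l m : List α) :
    commonPrefixLength (a :: l) (a :: m) = commonPrefixLength l m + 1 := by
  simp [commonPrefixLength]

theorem commonPrefixLength_of_head?_ne {l m : List α} (h : l.head? ≠ m.head?) :
    commonPrefixLength l m = 0 := by
  cases l <;> cases m <;> simp_all [commonPrefixLength]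

theorem commonPrefixLength_comm (l m : List α) :
    commonPrefixLength l m = commonPrefixLength m l := by
  classical
  induction l generalizing m with
  | nil => simp
  | cons a l ih => cases m <;> simp [commonPrefixLength, ih, eq_comm]

theorem min_commonPrefixLength_le (l m n : List α) :
    min (commonPrefixLength l m) (commonPrefixLength m n) ≤ commonPrefixLength l n := by
  induction l generalizing m n with
  | nil => simp
  | cons a l ih =>
    rcases m with _ | ⟨b, m⟩
    · simp
    rcases n with _ | ⟨c, n⟩
    · simp
    by_cases hab : a = b <;> by_cases hbc : b = c <;> simp_all [commonPrefixLength]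

theorem commonPrefixLength_take_self (l : List α) (j : ℕ) :
    commonPrefixLength (l.take j) l = (l.take j).length := by
  induction l generalizing j with
  | nil => simp
  | cons a l ih => cases j <;> simp [ih]

/-- The distance between two words in the rooted tree whose vertices are words and whose edges join
each word to its extensions by one letter. -/
noncomputable def wordDist (l m : List α) : ℤ := l.length + m.length - 2 * commonPrefixLength l m

@[simp]
theorem wordDist_nil_left (l : List α) : wordDist [] l = l.length := by simp [wordDist]

@[simp]
theorem wordDist_cons_self (a : α) (l m : List α) :
    wordDist (a :: l) (a :: m) = wordDist l m := by
  simp only [wordDist, List.length_cons, commonPrefixLength_cons_self]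
  omega

theorem wordDist_comm (l m : List α) : wordDist l m = wordDist m l := by
  rw [wordDist, wordDist, commonPrefixLength_comm, add_comm (l.length : ℤ)]

theorem wordDist_of_head?_ne {l m : List α} (h : l.head? ≠ m.head?) :
    wordDist l m = l.length + m.length := by
  simp [wordDist, commonPrefixLength_of_head?_ne h]

theorem wordDist_modifyHead {f : α → α} (hf : f.Injective) (l m : List α) :
    wordDist (l.modifyHead f) (m.modifyHead f) = wordDist l m := by
  classical
  cases l <;> cases m <;> simp [wordDist, commonPrefixLength, hf.eq_iff]

end CommonPrefix

/-- The free product of `A` with an infinite cyclic group. -/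
abbrev FreeProdInt (A : Type*) [Group A] : Type _ := Monoid.Coprod A (Multiplicative ℤ)

open Monoid.Coprod

namespace FreeProdInt

variable {A : Type*} [Group A]

/-- The subgroup `A` of the free product. -/
abbrev baseGroup (A : Type*) [Group A] : Subgroup (FreeProdInt A) := (inl : A →* _).range

/-- The generator of the infinite cyclic factor (`e = 1`) and its inverse (`e = -1`). -/
def stable (e : ℤˣ) : FreeProdInt A := inr (Multiplicative.ofAdd (e : ℤ))

theorem stable_neg (e : ℤˣ) : (stable (-e) : FreeProdInt A) = (stable e)⁻¹ := by
  simp [stable]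

theorem snd_stable (e : ℤˣ) : snd (stable e : FreeProdInt A) = Multiplicative.ofAdd (e : ℤ) :=
  rfl

theorem induction_on {motive : FreeProdInt A → Prop} (g : FreeProdInt A)
    (inl : ∀ a, motive (inl a)) (stable : ∀ e, motive (stable e))
    (mul : ∀ g h, motive g → motive h → motive (g * h)) : motive g := by
  induction g using Monoid.Coprod.induction_on with
  | inl a => exact inl a
  | mul g h hg hh => exact mul g h hg hh
  | inr n =>
    have hpow (k : ℤ) : motive (FreeProdInt.stable 1 ^ k) := by
      induction k with
      | zero => simpa using inl 1
      | succ k ih => simpa [zpow_add_one] using mul _ _ ih (stable 1)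
      | pred k ih => simpa [zpow_sub_one, ← stable_neg] using mul _ _ ih (stable (-1))
    convert hpow n.toAdd
    simp [FreeProdInt.stable, ← map_zpow, ← ofAdd_zsmul]

/-- The pair `(a, e)` encodes the syllable `a * stable e`. -/
def ofLetter (p : A × ℤˣ) : FreeProdInt A := inl p.1 * stable p.2

end FreeProdInt

/-- A reduced word `a₁ c^{e₁} a₂ c^{e₂} ⋯ aₙ c^{eₙ}` in the free product of `A` and the infinite
cyclic group generated by `c`, as the list of the pairs `(aᵢ, eᵢ)`: no `c^{e} 1 c^{-e}` occurs.
Reduced words represent the left cosets of `A`, which are the vertices of the Bass–Serre tree of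
the free product viewed as an HNN extension of `A` over the trivial group. -/
@[ext]
structure ReducedWord (A : Type*) [Group A] where
  /-- The pairs `(aᵢ, eᵢ)`. -/
  toList : List (A × ℤˣ)
  isChain : toList.IsChain fun p q ↦ q.1 = 1 → p.2 = q.2

namespace ReducedWord

open FreeProdInt

variable {A : Type*} [Group A]

/-- The empty word, the base vertex of the tree. -/
def nil : ReducedWord A := ⟨[], .nil⟩

/-- The initial segment of length `min j n` of a word of length `n`. -/
def take (w : ReducedWord A) (j : ℕ) : ReducedWord A := ⟨w.toList.take j, w.isChain.take j⟩

instance : MulAction A (ReducedWord A) where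
  smul a w :=
    { toList := w.toList.modifyHead (Prod.map (a * ·) id)
      isChain := by
        obtain ⟨_ | ⟨p, _ | ⟨q, l⟩⟩, hl⟩ := w
        exacts [.nil, .singleton _, by simpa using hl] }
  one_smul w := by
    ext1
    change w.toList.modifyHead (Prod.map (1 * ·) id) = id w.toList
    rw [← List.modifyHead_id]
    congr 1
    ext p <;> simp
  mul_smul a b w := by
    ext1
    change w.toList.modifyHead _ = (w.toList.modifyHead _).modifyHead _
    rw [List.modifyHead_modifyHead]
    congr 1
    ext p <;> simp [mul_assoc]

theorem toList_smul (a : A) (w : ReducedWord A) :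
    (a • w).toList = w.toList.modifyHead (Prod.map (a * ·) id) := rfl

open scoped Classical in
/-- Left multiplication of a reduced word by the stable letter `c^e`. -/
noncomputable def stableMul (e : ℤˣ) (w : ReducedWord A) : ReducedWord A where
  toList := if w.toList.head? = some (1, -e) then w.toList.tail else (1, e) :: w.toList
  isChain := by
    split_ifs with h
    · exact w.isChain.tail
    · refine w.isChain.cons fun p hp hp₁ ↦ ?_
      by_contra hne
      exact h (hp.trans (congrArg some (Prod.ext hp₁ (Int.units_ne_iff_eq_neg.1 (Ne.symm hne)))))

theorem head?_ne_of_isChain_cons {e : ℤˣ} {l : List (A × ℤˣ)}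
    (h : ((1, -e) :: l).IsChain fun p q ↦ q.1 = 1 → p.2 = q.2) : l.head? ≠ some (1, e) :=
  fun hl ↦ units_ne_neg_self e (h.rel_head? hl rfl).symm

theorem toList_stableMul_of_eq_cons {e : ℤˣ} {w : ReducedWord A} {l : List (A × ℤˣ)}
    (h : w.toList = (1, -e) :: l) : (stableMul e w).toList = l := by
  simp [stableMul, h]

theorem toList_stableMul_of_head?_ne {e : ℤˣ} {w : ReducedWord A}
    (h : w.toList.head? ≠ some (1, -e)) : (stableMul e w).toList = (1, e) :: w.toList := by
  simp [stableMul, h]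

theorem stableMul_neg_stableMul (e : ℤˣ) (w : ReducedWord A) :
    stableMul (-e) (stableMul e w) = w := by
  ext1
  by_cases h : w.toList.head? = some (1, -e)
  · obtain ⟨l, hl⟩ := List.head?_eq_some_iff.1 h
    have hchain := w.isChain
    rw [hl] at hchain
    have htail := toList_stableMul_of_eq_cons hl
    rw [toList_stableMul_of_head?_ne, htail, hl]
    rw [htail, neg_neg]
    exact head?_ne_of_isChain_cons hchain
  · exact toList_stableMul_of_eq_cons (by rw [toList_stableMul_of_head?_ne h, neg_neg])

theorem wordDist_stableMul (e : ℤˣ) (v w : ReducedWord A) :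
    wordDist (stableMul e v).toList (stableMul e w).toList = wordDist v.toList w.toList := by
  have hcancel {v w : ReducedWord A} (hv : v.toList.head? = some (1, -e))
      (hw : w.toList.head? ≠ some (1, -e)) :
      wordDist (stableMul e v).toList (stableMul e w).toList = wordDist v.toList w.toList := by
    obtain ⟨l, hl⟩ := List.head?_eq_some_iff.1 hv
    have hchain := v.isChain
    rw [hl] at hchain
    rw [wordDist_of_head?_ne (hv.trans_ne hw.symm), toList_stableMul_of_eq_cons hl,
      toList_stableMul_of_head?_ne hw, wordDist_of_head?_ne (head?_ne_of_isChain_cons hchain), hl]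
    simp only [List.length_cons]
    omega
  by_cases hv : v.toList.head? = some (1, -e) <;> by_cases hw : w.toList.head? = some (1, -e)
  · obtain ⟨l, hl⟩ := List.head?_eq_some_iff.1 hv
    obtain ⟨m, hm⟩ := List.head?_eq_some_iff.1 hw
    rw [toList_stableMul_of_eq_cons hl, toList_stableMul_of_eq_cons hm, hl, hm, wordDist_cons_self]
  · exact hcancel hv hw
  · rw [wordDist_comm, hcancel hw hv, wordDist_comm]
  · rw [toList_stableMul_of_head?_ne hv, toList_stableMul_of_head?_ne hw, wordDist_cons_self]

/-- Left multiplication by the generator of the infinite cyclic factor, as a permutation. -/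
noncomputable def stablePerm : Equiv.Perm (ReducedWord A) where
  toFun := stableMul 1
  invFun := stableMul (-1)
  left_inv := stableMul_neg_stableMul 1
  right_inv w := by simpa using stableMul_neg_stableMul (-1) w

noncomputable instance : MulAction (FreeProdInt A) (ReducedWord A) :=
  MulAction.compHom _ (lift (MulAction.toPermHom A (ReducedWord A)) (zpowersHom _ stablePerm))

theorem inl_smul (a : A) (w : ReducedWord A) : (inl a : FreeProdInt A) • w = a • w := rfl

theorem stable_smul (e : ℤˣ) (w : ReducedWord A) :
    (stable e : FreeProdInt A) • w = stableMul e w := by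
  change (stablePerm ^ (e : ℤ)) w = stableMul e w
  obtain rfl | rfl := Int.units_eq_one_or e
  · rw [Units.val_one, zpow_one]; rfl
  · rw [Units.val_neg, Units.val_one, zpow_neg_one]; rfl

theorem wordDist_smul (g : FreeProdInt A) (v w : ReducedWord A) :
    wordDist (g • v).toList (g • w).toList = wordDist v.toList w.toList := by
  induction g using FreeProdInt.induction_on generalizing v w with
  | inl a =>
    exact wordDist_modifyHead ((mul_right_injective a).prodMap Function.injective_id) _ _
  | stable e => rw [stable_smul, stable_smul, wordDist_stableMul]
  | mul g h hg hh => rw [mul_smul, mul_smul, hg, hh]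

/-- The element of the free product spelled by a word. -/
def eval (w : ReducedWord A) : FreeProdInt A := (w.toList.map ofLetter).prod

theorem eval_smul_mem (g : FreeProdInt A) (w : ReducedWord A) :
    (eval (g • w))⁻¹ * g * eval w ∈ baseGroup A := by
  induction g using FreeProdInt.induction_on generalizing w with
  | inl a =>
    obtain ⟨_ | ⟨p, l⟩, hl⟩ := w
    · exact ⟨a, by simp [eval, inl_smul, toList_smul]⟩
    · exact ⟨1, by simp [eval, inl_smul, toList_smul, ofLetter, mul_assoc]⟩
  | stable e =>
    rw [stable_smul]
    refine ⟨1, ?_⟩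
    by_cases h : w.toList.head? = some (1, -e)
    · obtain ⟨l, hl⟩ := List.head?_eq_some_iff.1 h
      simp [eval, hl, toList_stableMul_of_eq_cons hl, ofLetter, stable_neg]
    · simp [eval, toList_stableMul_of_head?_ne h, ofLetter, mul_assoc]
  | mul g h hg hh =>
    rw [mul_smul]
    convert mul_mem (hg (h • w)) (hh w) using 1
    group

theorem eval_smul_nil (w : ReducedWord A) : eval w • nil = w := by
  obtain ⟨l, hl⟩ := w
  induction l with
  | nil => exact one_smul _ _
  | cons p l ih =>
    have heval : eval ⟨p :: l, hl⟩ = inl p.1 * stable p.2 * eval ⟨l, hl.of_cons⟩ := by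
      simp [eval, ofLetter]
    rw [heval, mul_smul, ih, mul_smul, stable_smul, inl_smul]
    ext1
    rw [toList_smul, toList_stableMul_of_head?_ne]
    · simp
    · exact fun h ↦ units_ne_neg_self p.2 (hl.rel_head? h rfl)

end ReducedWord

namespace FreeProdInt

open ReducedWord
open scoped Pointwise

variable {A : Type*} [Group A]

/-- The number of syllables `c^{±1}` in the reduced word of `g`; equivalently, the distance by which
`g` displaces the base vertex of the Bass–Serre tree. -/
noncomputable def length (g : FreeProdInt A) : ℕ := (g • (nil : ReducedWord A)).toList.length

theorem length_inv_mul (g h : FreeProdInt A) :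
    (length (g⁻¹ * h) : ℤ) = wordDist (g • (nil : ReducedWord A)).toList (h • nil).toList := by
  rw [← wordDist_smul g⁻¹, inv_smul_smul, ← mul_smul]
  simp [length, nil]

theorem gromov_length (g h : FreeProdInt A) : gromov length g h =
    2 * commonPrefixLength (g • (nil : ReducedWord A)).toList (h • nil).toList := by
  rw [gromov, length_inv_mul, wordDist, length, length]
  omega

theorem length_one : length (1 : FreeProdInt A) = 0 := by
  simp [length, nil]

theorem isLyndonLength_length : IsLyndonLength (length : FreeProdInt A → ℕ) where
  map_one := length_one
  map_inv g := by
    have h := length_inv_mul g 1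
    rw [mul_one, one_smul, wordDist_comm] at h
    simpa [nil, length] using h
  min_gromov_le g h k := by
    have := min_commonPrefixLength_le (g • (nil : ReducedWord A)).toList (h • nil).toList
      (k • nil).toList
    simp only [gromov_length]
    omega

theorem even_length_mul_self (g : FreeProdInt A) : Even (length (g * g)) := by
  have h := gromov_length g⁻¹ g
  rw [isLyndonLength_length.gromov_inv_left] at h
  exact Nat.even_iff.2 (by omega)

theorem exists_length_add_length_inv_mul_eq {g : FreeProdInt A} {j : ℕ} (hj : j ≤ length g) :
    ∃ p : FreeProdInt A, length p = j ∧ length p + length (p⁻¹ * g) = length g := by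
  let w := g • (nil : ReducedWord A)
  have hlength : length (eval (w.take j)) = j := by
    rw [length, eval_smul_nil]
    exact List.length_take_of_le hj
  have hcommon : commonPrefixLength (w.take j).toList w.toList = j :=
    (commonPrefixLength_take_self _ _).trans (List.length_take_of_le hj)
  have hgromov := gromov_length (eval (w.take j)) g
  rw [eval_smul_nil, hcommon, gromov] at hgromov
  exact ⟨_, hlength, by omega⟩

theorem exists_eq_eval_mul_inl (g : FreeProdInt A) :
    ∃ a : A, g = eval (g • (nil : ReducedWord A)) * inl a := by
  obtain ⟨a, ha⟩ := eval_smul_mem g nil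
  exact ⟨a, by rw [ha]; simp [eval, nil]⟩

theorem length_inl (a : A) : length (inl a : FreeProdInt A) = 0 := by
  rw [length, inl_smul, toList_smul, List.length_modifyHead]; rfl

theorem length_eq_zero_iff {g : FreeProdInt A} : length g = 0 ↔ g ∈ baseGroup A := by
  refine ⟨fun h ↦ ?_, fun ⟨a, ha⟩ ↦ ha ▸ length_inl a⟩
  obtain ⟨a, ha⟩ := exists_eq_eval_mul_inl g
  rw [length, List.length_eq_zero_iff] at h
  exact ⟨a, by rw [ha]; simp [eval, h]⟩

theorem length_eq_one {g : FreeProdInt A} (h : length g = 1) :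
    ∃ (a : A) (e : ℤˣ) (b : A), g = inl a * stable e * inl b := by
  obtain ⟨b, hb⟩ := exists_eq_eval_mul_inl g
  obtain ⟨p, hp⟩ := List.length_eq_one_iff.1 h
  exact ⟨p.1, p.2, b, by rw [hb]; simp [eval, hp, ofLetter]⟩

theorem length_stable (e : ℤˣ) : length (stable e : FreeProdInt A) = 1 := by
  rw [length, stable_smul, toList_stableMul_of_head?_ne] <;> simp [nil]

theorem length_mul_inl (g : FreeProdInt A) (a : A) : length (g * inl a) = length g := by
  have h : a • (nil : ReducedWord A) = nil := rfl
  rw [length, mul_smul, inl_smul, h, length]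

theorem length_inl_mul (a : A) (g : FreeProdInt A) : length (inl a * g) = length g := by
  rw [length, mul_smul, inl_smul, toList_smul, List.length_modifyHead, length]

theorem length_conj_inl (g : FreeProdInt A) {a : A} (ha : a ≠ 1) :
    length (g * inl a * g⁻¹) = 2 * length g := by
  have hhead (w : ReducedWord A) : commonPrefixLength w.toList (a • w).toList = 0 := by
    obtain ⟨_ | ⟨p, l⟩, hl⟩ := w
    · exact commonPrefixLength_nil_left _
    · refine commonPrefixLength_of_head?_ne fun h ↦ ha ?_
      simpa [toList_smul, Prod.ext_iff] using h
  have hgromov := gromov_length g⁻¹ (inl a * g⁻¹)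
  rw [mul_smul, inl_smul, hhead, isLyndonLength_length.gromov_inv_left, length_inl_mul,
    isLyndonLength_length.map_inv, ← mul_assoc] at hgromov
  omega

theorem mem_baseGroup_of_conj_mem {g : FreeProdInt A} {a : A} (ha : a ≠ 1)
    (h : g * inl a * g⁻¹ ∈ baseGroup A) : g ∈ baseGroup A := by
  rw [← length_eq_zero_iff, length_conj_inl g ha] at h
  exact length_eq_zero_iff.1 (by omega)

theorem mem_baseGroup_of_commute_inl {g : FreeProdInt A} {a : A} (ha : a ≠ 1)
    (h : Commute g (inl a)) : g ∈ baseGroup A :=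
  mem_baseGroup_of_conj_mem ha ⟨a, h.mul_inv_cancel.symm⟩

theorem snd_eq_one_of_mem_baseGroup {g : FreeProdInt A} (hg : g ∈ baseGroup A) : snd g = 1 := by
  obtain ⟨a, rfl⟩ := hg
  exact snd_apply_inl a

theorem snd_ne_one_of_length_eq_one {g : FreeProdInt A} (hg : length g = 1) : snd g ≠ 1 := by
  obtain ⟨a, e, b, rfl⟩ := length_eq_one hg
  simp [snd_stable]

-- The tree has no inversions: if `s` swapped the ends `h • o`, `g • o` of an edge, `snd s` would be
-- trivial by `snd (s * s) = 1`, but also equal to `snd (h⁻¹ * g) ≠ 1`.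
theorem even_length_of_length_mul_self_le {s : FreeProdInt A}
    (hs : length (s * s) ≤ length s) : Even (length s) := by
  have hL := isLyndonLength_length (A := A)
  by_contra hodd
  obtain ⟨m, hm⟩ := Nat.not_even_iff_odd.1 hodd
  have heven := Nat.even_iff.1 (even_length_mul_self s)
  obtain ⟨h, hhm, hh⟩ := exists_length_add_length_inv_mul_eq (g := s) (j := m) (by omega)
  obtain ⟨g, hgm, hg⟩ := exists_length_add_length_inv_mul_eq (g := s) (j := m + 1) (by omega)
  have hh' := hL.map_add_map_inv_mul_inv_eq hh (by omega)
  have hg' := hL.map_add_map_inv_mul_inv_eq hg (by omega)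
  have hsg := snd_eq_one_of_mem_baseGroup (length_eq_zero_iff.1
    (hL.map_inv_mul_mul_eq_zero hh hg' (by omega)))
  have hsh := snd_eq_one_of_mem_baseGroup (length_eq_zero_iff.1
    (hL.map_inv_mul_mul_eq_zero hg hh' (by omega)))
  have hhg : length (h⁻¹ * g) = 1 := by
    have hmin := hL.min_gromov_le h s g
    have hle := hL.map_mul_le h (h⁻¹ * g)
    rw [hL.gromov_comm s g, gromov, gromov, gromov] at hmin
    rw [mul_inv_cancel_left] at hle
    omega
  apply snd_ne_one_of_length_eq_one hhg
  simp only [map_mul, map_inv] at hsg hsh ⊢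
  apply Multiplicative.toAdd.injective
  have h₁ := congrArg Multiplicative.toAdd hsg
  have h₂ := congrArg Multiplicative.toAdd hsh
  simp only [toAdd_mul, toAdd_inv, toAdd_one] at h₁ h₂ ⊢
  omega

-- `s` fixes the midpoint `g • o` of the geodesic from the base vertex `o` to `s • o`.
theorem exists_mem_conj_baseGroup {s : FreeProdInt A} (hs : length (s * s) ≤ length s) :
    ∃ g : FreeProdInt A, s ∈ MulAut.conj g • baseGroup A := by
  have hL := isLyndonLength_length (A := A)
  obtain ⟨m, hm⟩ := even_length_of_length_mul_self_le hs
  obtain ⟨g, hgm, hg⟩ := exists_length_add_length_inv_mul_eq (g := s) (j := m) (by omega)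
  have hg' := hL.map_add_map_inv_mul_inv_eq hg (by omega)
  refine ⟨g, Subgroup.mem_pointwise_smul_iff_inv_smul_mem.2 ?_⟩
  have hmem := length_eq_zero_iff.1 (hL.map_inv_mul_mul_eq_zero hg hg' (by omega))
  simpa using hmem

theorem length_lt_length_mul_self {s : FreeProdInt A} (hs : snd s ≠ 1) :
    length s < length (s * s) := by
  by_contra! hle
  obtain ⟨g, x, ⟨a, rfl⟩, rfl⟩ := exists_mem_conj_baseGroup hle
  simp at hs

theorem exists_commute_mem {x y : FreeProdInt A} (hxy : Commute x y) :
    (∃ g : FreeProdInt A, x ∈ MulAut.conj g • baseGroup A ∧ y ∈ MulAut.conj g • baseGroup A) ∨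
      ∃ u, x ∈ Subgroup.zpowers u ∧ y ∈ Subgroup.zpowers u := by
  obtain ⟨x', y', hcomm, hle, hx, hy⟩ :=
    isLyndonLength_length.exists_commute_map_mul_self_le hxy
  by_cases hx' : x' = 1
  · right
    rw [hx', Subgroup.closure_insert_one, ← Subgroup.zpowers_eq_closure] at hx hy
    exact ⟨y', hx, hy⟩
  left
  obtain ⟨g, _, ⟨a, rfl⟩, rfl⟩ := exists_mem_conj_baseGroup hle
  have ha : a ≠ 1 := by
    rintro rfl
    simp at hx'
  have hy' : y' ∈ MulAut.conj g • baseGroup A := by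
    rw [Subgroup.mem_pointwise_smul_iff_inv_smul_mem]
    refine mem_baseGroup_of_commute_inl ha ?_
    simpa [mul_assoc] using hcomm.symm.map (MulAut.conj g)⁻¹
  have hclosure : Subgroup.closure {MulAut.conj g • inl a, y'} ≤ MulAut.conj g • baseGroup A := by
    rw [Subgroup.closure_le, Set.pair_subset_iff]
    exact ⟨Subgroup.smul_mem_pointwise_smul _ _ _ ⟨a, rfl⟩, hy'⟩
  exact ⟨g, hclosure hx, hclosure hy⟩

section Endomorphism

variable {f : FreeProdInt A →* FreeProdInt A} {φ : A →* A}

variable (f) in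
theorem length_map_stable (e : ℤˣ) : length (f (stable e)) = length (f (stable 1)) := by
  obtain rfl | rfl := Int.units_eq_one_or e
  · rfl
  · rw [stable_neg, map_inv, isLyndonLength_length.map_inv]

theorem length_map_ofLetter (hφ : ∀ a, f (inl a) = inl (φ a)) (p : A × ℤˣ) :
    length (f (ofLetter p)) = length (f (stable 1)) := by
  rw [ofLetter, map_mul, hφ, length_inl_mul, length_map_stable]

theorem snd_map_stable_ne_one (hf : snd (f (stable 1)) ≠ 1) (e : ℤˣ) :
    snd (f (stable e)) ≠ 1 := by
  obtain rfl | rfl := Int.units_eq_one_or e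
  · exact hf
  · rwa [stable_neg, map_inv, map_inv, ne_eq, inv_eq_one]

theorem length_map_stable_pos (hf : snd (f (stable 1)) ≠ 1) : 0 < length (f (stable 1)) :=
  Nat.pos_of_ne_zero fun h ↦ hf (snd_eq_one_of_mem_baseGroup (length_eq_zero_iff.1 h))

theorem length_map_stable_lt (hφ : ∀ a, f (inl a) = inl (φ a)) (hinj : Function.Injective φ)
    (hf : snd (f (stable 1)) ≠ 1) {p q : A × ℤˣ} (hpq : q.1 = 1 → p.2 = q.2) :
    length (f (stable 1)) < length (f (ofLetter p * ofLetter q)) := by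
  have hmul : length (f (ofLetter p * ofLetter q)) =
      length (f (stable p.2) * inl (φ q.1) * f (stable q.2)) := by
    rw [ofLetter, ofLetter, map_mul, map_mul, map_mul, hφ, hφ, mul_assoc, length_inl_mul, mul_assoc]
  rw [hmul]
  by_cases h : p.2 = q.2
  · rw [h]
    have hsnd : snd (f (stable q.2) * inl (φ q.1)) ≠ 1 := by
      simpa using snd_map_stable_ne_one hf q.2
    have hlt := length_lt_length_mul_self hsnd
    rwa [← mul_assoc, length_mul_inl, length_mul_inl, length_map_stable] at hlt
  · have hne : φ q.1 ≠ 1 := (map_ne_one_iff φ hinj).2 (mt hpq h)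
    rw [Int.units_ne_iff_eq_neg.1 (Ne.symm h), stable_neg, map_inv, length_conj_inl _ hne,
      length_map_stable f p.2]
    exact lt_mul_of_one_lt_left (length_map_stable_pos hf) one_lt_two

theorem length_add_length_map_stable_le (hφ : ∀ a, f (inl a) = inl (φ a))
    (hinj : Function.Injective φ) (hf : snd (f (stable 1)) ≠ 1) {g : FreeProdInt A}
    (hg : 0 < length g) : length g + length (f (stable 1)) ≤ length (f g) + 1 := by
  obtain ⟨a, ha⟩ := exists_eq_eval_mul_inl g
  obtain ⟨p, l, hl⟩ := List.exists_cons_of_length_pos hg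
  have hchain := (g • (nil : ReducedWord A)).isChain
  have himage : ((p :: l).map (f ∘ ofLetter)).IsChain fun h k ↦
      length h < length (h * k) ∧ length k < length (h * k) := by
    rw [List.isChain_map, ← hl]
    refine hchain.imp fun p q hpq ↦ ?_
    have hlt := length_map_stable_lt hφ hinj hf hpq
    rw [map_mul] at hlt
    simpa only [Function.comp_apply, length_map_ofLetter hφ, and_self] using hlt
  have hprod : length (f g) = length (f (ofLetter p) :: l.map (f ∘ ofLetter)).prod := by
    conv_lhs => rw [ha, map_mul, hφ, length_mul_inl, eval, hl, map_list_prod, List.map_map]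
    rfl
  have hpos : 0 < length (f (ofLetter p)) := by
    rw [length_map_ofLetter hφ]
    exact length_map_stable_pos hf
  have hle := (isLyndonLength_length.add_length_le_map_prod hpos himage).1
  rw [List.length_map, length_map_ofLetter hφ, ← hprod] at hle
  rw [length, hl, List.length_cons]
  omega

theorem exists_injective_map_inl_eq (hf : Function.Injective f)
    (hA : ∀ a, f (inl a) ∈ baseGroup A) :
    ∃ φ : A →* A, Function.Injective φ ∧ ∀ a, f (inl a) = inl (φ a) := by
  have hφ (a : A) : f (inl a) = inl ((fst.comp (f.comp inl)) a) := by
    obtain ⟨b, hb⟩ := hA a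
    simp [← hb]
  refine ⟨fst.comp (f.comp inl), fun a b hab ↦ inl_injective (hf ?_), hφ⟩
  rw [hφ, hφ, hab]

theorem snd_map_stable_ne_one_of_surjective (hf : Function.Surjective f)
    (hA : ∀ a, f (inl a) ∈ baseGroup A) : snd (f (stable 1)) ≠ 1 := by
  intro hsnd
  have htrivial : snd.comp f = 1 :=
    hom_ext (MonoidHom.ext fun a ↦ snd_eq_one_of_mem_baseGroup (hA a)) (MonoidHom.ext_mint hsnd)
  obtain ⟨g, hg⟩ := hf (stable 1)
  have h := DFunLike.congr_fun htrivial g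
  simp [hg, snd_stable] at h

theorem length_add_length_map_stable_le_of_bijective (hf : Function.Bijective f)
    (hA : ∀ a, f (inl a) ∈ baseGroup A) {g : FreeProdInt A} (hg : 0 < length g) :
    length g + length (f (stable 1)) ≤ length (f g) + 1 := by
  obtain ⟨φ, hinj, hφ⟩ := exists_injective_map_inl_eq hf.1 hA
  exact length_add_length_map_stable_le hφ hinj (snd_map_stable_ne_one_of_surjective hf.2 hA) hg

theorem mem_baseGroup_of_map_mem (hf : Function.Bijective f) (hA : ∀ a, f (inl a) ∈ baseGroup A)
    {g : FreeProdInt A} (hg : f g ∈ baseGroup A) : g ∈ baseGroup A := by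
  rw [← length_eq_zero_iff] at hg ⊢
  have hpos := length_map_stable_pos (snd_map_stable_ne_one_of_surjective hf.2 hA)
  by_contra hne
  have := length_add_length_map_stable_le_of_bijective hf hA (Nat.pos_of_ne_zero hne)
  omega

theorem length_map_stable_eq_one (hf : Function.Bijective f) (hA : ∀ a, f (inl a) ∈ baseGroup A) :
    length (f (stable 1)) = 1 := by
  have hpos := length_map_stable_pos (snd_map_stable_ne_one_of_surjective hf.2 hA)
  obtain ⟨g, hg⟩ := hf.2 (stable 1)
  have hne : length g ≠ 0 := fun h ↦ by
    obtain ⟨a, rfl⟩ := length_eq_zero_iff.1 h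
    have := length_eq_zero_iff.2 (hA a)
    rw [hg, length_stable] at this
    omega
  have hle := length_add_length_map_stable_le_of_bijective hf hA (Nat.pos_of_ne_zero hne)
  rw [hg, length_stable] at hle
  omega

theorem exists_mulEquiv_map_inl_eq (hf : Function.Bijective f)
    (hA : ∀ a, f (inl a) ∈ baseGroup A) : ∃ φ : A ≃* A, ∀ a, f (inl a) = inl (φ a) := by
  obtain ⟨φ, hinj, hφ⟩ := exists_injective_map_inl_eq hf.1 hA
  refine ⟨MulEquiv.ofBijective φ ⟨hinj, fun b ↦ ?_⟩, hφ⟩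
  obtain ⟨g, hg⟩ := hf.2 (inl b)
  obtain ⟨a, rfl⟩ := mem_baseGroup_of_map_mem hf hA ⟨b, hg.symm⟩
  exact ⟨a, inl_injective ((hφ a).symm.trans hg)⟩

end Endomorphism

theorem exists_conj_map_inl_mem {z a : A} (hz : z ∈ Subgroup.center A)
    (hza : ∀ u : A, z ∈ Subgroup.zpowers u → a ∉ Subgroup.zpowers u)
    (Ψ : MulAut (FreeProdInt A)) :
    ∃ g : FreeProdInt A, ∀ v, (MulAut.conj g * Ψ) (inl v) ∈ baseGroup A := by
  have hcomm (v : A) : Commute (inl v : FreeProdInt A) (inl z) :=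
    Commute.map (Subgroup.mem_center_iff.1 hz v) inl
  obtain ⟨g, hg, -⟩ | ⟨u, hu⟩ := exists_commute_mem ((hcomm a).symm.map Ψ)
  · obtain ⟨b, hb⟩ := Subgroup.mem_pointwise_smul_iff_inv_smul_mem.1 hg
    replace hb : inl b = (MulAut.conj g⁻¹ * Ψ) (inl z) := by rw [hb, ← map_inv]; rfl
    have hb₁ : b ≠ 1 := by
      rintro rfl
      have hz₁ : z = 1 :=
        inl_injective (EquivLike.injective _ (by rw [← hb, map_one, map_one]))
      exact hza a (hz₁ ▸ one_mem _) (Subgroup.mem_zpowers a)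
    refine ⟨g⁻¹, fun v ↦ mem_baseGroup_of_commute_inl hb₁ ?_⟩
    rw [hb]
    exact (hcomm v).map (MulAut.conj g⁻¹ * Ψ)
  · have hpre {v : A} (hv : Ψ (inl v) ∈ Subgroup.zpowers u) :
        v ∈ Subgroup.zpowers (fst (Ψ⁻¹ u)) := by
      obtain ⟨n, hn⟩ := hv
      exact ⟨n, by simp [← map_zpow, show u ^ n = Ψ (inl v) from hn]⟩
    exact (hza _ (hpre hu.1) (hpre hu.2)).elim

end FreeProdInt

open FreeProdInt in
theorem aut_Z2astZ_normal_form_general {A : Type*} [Group A] {z a : A}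
    (hz : z ∈ Subgroup.center A)
    (hza : ∀ u : A, z ∈ Subgroup.zpowers u → a ∉ Subgroup.zpowers u)
    (Ψ : MulAut (Monoid.Coprod A (Multiplicative ℤ))) :
    ∃ (Φ : MulAut (Monoid.Coprod A (Multiplicative ℤ)))
      (h : Monoid.Coprod A (Multiplicative ℤ)),
      (∀ x, Ψ x = h⁻¹ * Φ x * h) ∧
      (∃ φ : A ≃* A, ∀ v, Φ (inl v) = inl (φ v)) ∧
      (∃ (w x : A) (ε : ℤ), (ε = 1 ∨ ε = -1) ∧
        Φ (inr (Multiplicative.ofAdd 1)) = inl w * inr (Multiplicative.ofAdd ε) * inl x) := by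
  obtain ⟨g, hg⟩ := exists_conj_map_inl_mem hz hza Ψ
  have hbij : Function.Bijective (MulAut.conj g * Ψ : MulAut _).toMonoidHom := MulEquiv.bijective _
  obtain ⟨w, e, x, hc⟩ := length_eq_one (length_map_stable_eq_one hbij hg)
  exact ⟨MulAut.conj g * Ψ, g, by simp [mul_assoc], exists_mulEquiv_map_inl_eq hbij hg,
    w, x, e, Int.isUnit_iff.1 e.isUnit, hc⟩

theorem ofAdd_zero_one_notMem_zpowers (u : Multiplicative (ℤ × ℤ))
    (h : Multiplicative.ofAdd (1, 0) ∈ Subgroup.zpowers u) :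
    Multiplicative.ofAdd (0, 1) ∉ Subgroup.zpowers u := by
  rintro ⟨n, hn⟩
  obtain ⟨m, hm⟩ := h
  have h₁ : m * u.toAdd.1 = 1 := congrArg (fun v ↦ v.toAdd.1) hm
  have h₂ : m * u.toAdd.2 = 0 := congrArg (fun v ↦ v.toAdd.2) hm
  have h₃ : n * u.toAdd.2 = 1 := congrArg (fun v ↦ v.toAdd.2) hn
  obtain rfl | h₀ := mul_eq_zero.1 h₂
  · simp at h₁
  · simp [h₀] at h₃

/-- Every automorphism `Ψ` of `ℤ² * ℤ` agrees, up to an inner automorphism, with an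
automorphism `Φ` that restricts to an automorphism of the `ℤ²` factor and sends
`c` to `ι₁(w)·ι₂(±1)·ι₁(x)` for some `w, x ∈ ℤ²`. -/
theorem aut_Z2astZ_normal_form (Ψ : MulAut Z2astZ) :
    ∃ (Φ : MulAut Z2astZ) (h : Z2astZ),
      (∀ x : Z2astZ, Ψ x = h⁻¹ * Φ x * h) ∧
      (∃ φ : Multiplicative (ℤ × ℤ) ≃* Multiplicative (ℤ × ℤ),
        ∀ v : ℤ × ℤ, Φ (iota1 v) = Monoid.Coprod.inl (φ (Multiplicative.ofAdd v))) ∧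
      (∃ (w x : ℤ × ℤ) (ε : ℤ), (ε = 1 ∨ ε = -1) ∧
        Φ cGen = iota1 w * iota2 ε * iota1 x) :=
  aut_Z2astZ_normal_form_general (z := Multiplicative.ofAdd (1, 0))
    (Subgroup.mem_center_iff.2 fun v ↦ mul_comm v _) ofAdd_zero_one_notMem_zpowers Ψ
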